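/- Let φ be an outmap on the standard n-cube (n ≥ 2) that is a PUSO of the full face [∅,{1,…,n}]. Then for every pair of antipodal vertices U and V = {1,…,n} \ U, the outmap values within the cube coincide: φ(U) ∩ {1,…,n} = φ(V) ∩ {1,…,n}. -/

import Mathlib

/-!
Replacing `φ` by `V ↦ φ V ∆ {i}` (reversing all edges in direction `i`) preserves the PUSO
property. Indeed, a face whose carrier contains `i` splits into two opposite `i`-facets; if these
have unique sinks `W₀` and `W₁`, the only candidates for sinks of the face are `W₀` and `W₁`, and
`W_k` is a sink exactly when `i ∉ φ W_k`. So the face has a unique sink iff exactly one of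
`φ W₀`, `φ W₁` contains `i` (`hasUniqueSink_iff_of_facets`), a condition invariant under the
reversal. Iterating, `V ↦ φ V ∆ R` is a PUSO for every `R` (`IsPUSO.symmDiff_right`).

Take `R = φ U`. Then `U` is a sink of the whole cube under `φ ∆ R`, hence not the only one: there is
another sink `V`. If `U` and `V` were not antipodal, both would be sinks of a common facet,
which has only one. So `V` is the antipode of `U`, and being a sink means `φ V` and `φ U` agree in
the cube.
-/

open Finset
open scoped symmDiff

/-- `V` is a sink of the face `[A,B]` of the standard cube (vertices are subsets
of `{1,…,n}`) under the outmap `φ`: `V` belongs to the face and `φ V` has no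
coordinate in the carrier `B \ A`. -/
def IsSink (φ : Finset ℕ → Finset ℕ) (A B V : Finset ℕ) : Prop :=
  A ⊆ V ∧ V ⊆ B ∧ φ V ∩ (B \ A) = ∅

/-- The face `[A,B]` has exactly one sink under `φ`. -/
def HasUniqueSink (φ : Finset ℕ → Finset ℕ) (A B : Finset ℕ) : Prop :=
  ∃! V, IsSink φ A B V

/-- `φ` is a USO of the face `[A,B]`: every face contained in `[A,B]`
(including `[A,B]` itself) has exactly one sink under `φ`. -/
def IsUSO (φ : Finset ℕ → Finset ℕ) (A B : Finset ℕ) : Prop :=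
  A ⊆ B ∧ ∀ A' B' : Finset ℕ, A ⊆ A' → A' ⊆ B' → B' ⊆ B → HasUniqueSink φ A' B'

/-- `φ` is a PUSO of the face `[A,B]`: `[A,B]` does not have exactly one sink
under `φ`, but every proper face contained in `[A,B]` has exactly one sink. -/
def IsPUSO (φ : Finset ℕ → Finset ℕ) (A B : Finset ℕ) : Prop :=
  A ⊆ B ∧ ¬ HasUniqueSink φ A B ∧
    ∀ A' B' : Finset ℕ, A ⊆ A' → A' ⊆ B' → B' ⊆ B → ¬(A' = A ∧ B' = B) →
      HasUniqueSink φ A' B'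

theorem isSink_iff {φ : Finset ℕ → Finset ℕ} {A B V : Finset ℕ} :
    IsSink φ A B V ↔ A ⊆ V ∧ V ⊆ B ∧ ∀ j ∈ B, j ∉ A → j ∉ φ V := by
  unfold IsSink
  simp only [Finset.eq_empty_iff_forall_notMem, Finset.mem_inter, Finset.mem_sdiff]
  grind

/-- Reversing the edges in direction `i` does not change the sinks of a face whose carrier does
not contain `i`. -/
theorem isSink_symmDiff_singleton_iff {φ : Finset ℕ → Finset ℕ} {A B V : Finset ℕ} {i : ℕ}
    (hi : ¬(i ∈ B ∧ i ∉ A)) :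
    IsSink (fun W => φ W ∆ {i}) A B V ↔ IsSink φ A B V := by
  simp only [isSink_iff, Finset.mem_symmDiff, Finset.mem_singleton]
  grind

/-- The sinks of a face are those sinks of its two `i`-facets whose `i`-edge is incoming. -/
theorem isSink_iff_facets {φ : Finset ℕ → Finset ℕ} {A B V : Finset ℕ} {i : ℕ}
    (hiB : i ∈ B) (hiA : i ∉ A) :
    IsSink φ A B V ↔ (IsSink φ A (B.erase i) V ∨ IsSink φ (insert i A) B V) ∧ i ∉ φ V := by
  simp only [isSink_iff, Finset.subset_iff, Finset.mem_insert, Finset.mem_erase]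
  grind

theorem hasUniqueSink_iff_of_facets {φ : Finset ℕ → Finset ℕ} {A B W₀ W₁ : Finset ℕ} {i : ℕ}
    (hiB : i ∈ B) (hiA : i ∉ A)
    (h₀ : ∀ V, IsSink φ A (B.erase i) V ↔ V = W₀)
    (h₁ : ∀ V, IsSink φ (insert i A) B V ↔ V = W₁) :
    HasUniqueSink φ A B ↔ (i ∈ φ W₀ ↔ i ∉ φ W₁) := by
  have hne : W₀ ≠ W₁ := by
    rintro rfl
    have a := ((h₀ W₀).2 rfl).2.1
    have b := ((h₁ W₀).2 rfl).1
    exact Finset.notMem_erase i B (a (b (Finset.mem_insert_self i A)))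
  unfold HasUniqueSink ExistsUnique
  simp only [isSink_iff_facets hiB hiA, h₀, h₁]
  grind

theorem hasUniqueSink_symmDiff_singleton_iff {φ : Finset ℕ → Finset ℕ} {A B : Finset ℕ} {i : ℕ}
    (h : i ∈ B → i ∉ A → HasUniqueSink φ A (B.erase i) ∧ HasUniqueSink φ (insert i A) B) :
    HasUniqueSink (fun W => φ W ∆ {i}) A B ↔ HasUniqueSink φ A B := by
  by_cases hi : i ∈ B ∧ i ∉ A
  · obtain ⟨⟨W₀, hW₀, hu₀⟩, ⟨W₁, hW₁, hu₁⟩⟩ := h hi.1 hi.2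
    have h₀ : ∀ V, IsSink φ A (B.erase i) V ↔ V = W₀ :=
      fun V => ⟨hu₀ V, fun e => e ▸ hW₀⟩
    have h₁ : ∀ V, IsSink φ (insert i A) B V ↔ V = W₁ :=
      fun V => ⟨hu₁ V, fun e => e ▸ hW₁⟩
    rw [hasUniqueSink_iff_of_facets hi.1 hi.2 h₀ h₁,
      hasUniqueSink_iff_of_facets (W₀ := W₀) (W₁ := W₁) hi.1 hi.2
        (fun V => (isSink_symmDiff_singleton_iff (by simp)).trans (h₀ V))
        (fun V => (isSink_symmDiff_singleton_iff (by simp)).trans (h₁ V))]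
    simp only [Finset.mem_symmDiff, Finset.mem_singleton]
    grind
  · unfold HasUniqueSink
    simp only [isSink_symmDiff_singleton_iff hi]

theorem IsPUSO.symmDiff_singleton {φ : Finset ℕ → Finset ℕ} {A B : Finset ℕ}
    (hφ : IsPUSO φ A B) (i : ℕ) : IsPUSO (fun W => φ W ∆ {i}) A B := by
  obtain ⟨hAB, hnot, hall⟩ := hφ
  -- The `i`-facets of any face of `[A,B]`, including `[A,B]` itself, are proper faces of `[A,B]`.
  have key : ∀ A' B' : Finset ℕ, A ⊆ A' → A' ⊆ B' → B' ⊆ B →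
      (HasUniqueSink (fun W => φ W ∆ {i}) A' B' ↔ HasUniqueSink φ A' B') := by
    intro A' B' hA hAB' hB
    refine hasUniqueSink_symmDiff_singleton_iff fun hiB hiA => ⟨?_, ?_⟩
    · refine hall _ _ hA (Finset.subset_erase.2 ⟨hAB', hiA⟩)
        ((Finset.erase_subset _ _).trans hB) ?_
      rintro ⟨-, e⟩
      exact Finset.notMem_erase i B' (e ▸ hB hiB)
    · refine hall _ _ (hA.trans (Finset.subset_insert _ _))
        (Finset.insert_subset hiB hAB') hB ?_
      rintro ⟨e, -⟩
      exact hiA (hA (e ▸ Finset.mem_insert_self i A'))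
  refine ⟨hAB, fun h => hnot ((key A B subset_rfl hAB subset_rfl).1 h), ?_⟩
  intro A' B' hA hAB' hB hne
  exact (key A' B' hA hAB' hB).2 (hall A' B' hA hAB' hB hne)

theorem IsPUSO.symmDiff_right {φ : Finset ℕ → Finset ℕ} {A B : Finset ℕ}
    (hφ : IsPUSO φ A B) (R : Finset ℕ) : IsPUSO (fun W => φ W ∆ R) A B := by
  induction R using Finset.induction_on with
  | empty =>
    have e : (fun W => φ W ∆ (∅ : Finset ℕ)) = φ := funext fun W => symmDiff_bot (φ W)
    rwa [e]
  | insert i S hi ih =>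
    have e : (fun W => φ W ∆ insert i S) = fun W => (φ W ∆ S) ∆ {i} := by
      funext W
      ext j
      simp only [Finset.mem_symmDiff, Finset.mem_insert, Finset.mem_singleton]
      grind
    rw [e]
    exact ih.symmDiff_singleton i

/-- Two distinct sinks of a PUSO of `[∅, N]` are antipodal, since a common facet would have two
sinks. -/
theorem IsPUSO.eq_sdiff_of_isSink {φ : Finset ℕ → Finset ℕ} {N U V : Finset ℕ}
    (hφ : IsPUSO φ ∅ N) (hU : IsSink φ ∅ N U) (hV : IsSink φ ∅ N V) (hne : V ≠ U) :
    V = N \ U := by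
  obtain ⟨-, -, hall⟩ := hφ
  ext j
  by_cases hj : j ∈ N
  · have h₀ : ¬(j ∉ U ∧ j ∉ V) := by
      rintro ⟨hjU, hjV⟩
      have hs := hall ∅ (N.erase j) subset_rfl (Finset.empty_subset _) (Finset.erase_subset _ _)
        (fun e => Finset.notMem_erase j N (e.2.symm ▸ hj))
      rw [isSink_iff] at hU hV
      refine hne (hs.unique (isSink_iff.2 ?_) (isSink_iff.2 ?_)) <;> grind
    have h₁ : ¬(j ∈ U ∧ j ∈ V) := by
      rintro ⟨hjU, hjV⟩
      have hs := hall {j} N (Finset.empty_subset _) (Finset.singleton_subset_iff.2 hj) subset_rfl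
        (fun e => Finset.singleton_ne_empty j e.1)
      rw [isSink_iff] at hU hV
      refine hne (hs.unique (isSink_iff.2 ?_) (isSink_iff.2 ?_)) <;> grind
    grind
  · have := hV.2.1
    grind

/-- In a PUSO of the full face of the standard `n`-cube (`n ≥ 2`), antipodal
vertices have the same outmap value within the cube. -/
theorem puso_antipodal_outmaps_equal (n : ℕ) (hn : 2 ≤ n)
    (φ : Finset ℕ → Finset ℕ) (hφ : IsPUSO φ ∅ (Finset.Icc 1 n)) :
    ∀ U : Finset ℕ, U ⊆ Finset.Icc 1 n →
      φ U ∩ Finset.Icc 1 n = φ (Finset.Icc 1 n \ U) ∩ Finset.Icc 1 n := by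
  intro U hU
  have hψ := hφ.symmDiff_right (φ U)
  have hsU : IsSink (fun W => φ W ∆ φ U) ∅ (Finset.Icc 1 n) U :=
    isSink_iff.2 ⟨Finset.empty_subset _, hU, fun j _ _ => by simp⟩
  obtain ⟨V, hsV, hne⟩ : ∃ V, IsSink (fun W => φ W ∆ φ U) ∅ (Finset.Icc 1 n) V ∧ V ≠ U := by
    by_contra! h
    exact hψ.2.1 ⟨U, hsU, h⟩
  rw [← hψ.eq_sdiff_of_isSink hsU hsV hne]
  have h := (isSink_iff.1 hsV).2.2
  ext j
  have hj := h j
  simp only [Finset.mem_symmDiff, Finset.notMem_empty] at hj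
  simp only [Finset.mem_inter]
  tauto
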